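/- arXiv:2006.16005 — 2 statements merged into one kernel-verified Lean document; each statement's English description precedes it below -/
import Mathlib

section
/- For every positive integer n, the number of ordered pairs (x,y) of positive integers with x^3 + y^3 = n equals (the number of positive divisors d of n with d^3 = 4n) plus twice (the number of pairs (d,k), where d is a positive divisor of n and k is a positive integer, such that d^2 + 3k^2 = 4(n/d), d ≡ k (mod 2), and d − k ≥ 2). -/
/-!
Swapping `x` and `y` shows that the solutions of `x³ + y³ = n` number the diagonal ones plus twice
those with `y < x`. With `d = x + y` and `k = x - y`, the factorization `x³ + y³ = d (x² - xy + y²)`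
and the identity `4 (x² - xy + y²) = d² + 3k²` turn the solutions with `y < x` into the pairs
`(d, k)`, while on the diagonal `k = 0` and the equation becomes `d³ = 4n`.
-/

open Set

theorem ncard_eq_ncard_inter_diagonal_add_two_mul {α : Type*} [LinearOrder α] {S : Set (α × α)}
    (hfin : S.Finite) (hswap : Prod.swap ⁻¹' S = S) :
    S.ncard = (S ∩ diagonal α).ncard + 2 * (S ∩ {p | p.2 < p.1}).ncard := by
  have hupper : (S \ diagonal α) \ {p | p.2 < p.1} = Prod.swap ⁻¹' (S ∩ {p | p.2 < p.1}) := by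
    rw [preimage_inter, hswap]
    ext ⟨x, y⟩
    simp [and_assoc, lt_iff_le_and_ne (a := x), and_comm (a := x ≤ y)]
  have hlower : (S \ diagonal α) ∩ {p | p.2 < p.1} = S ∩ {p | p.2 < p.1} := by
    ext ⟨x, y⟩
    simpa [and_assoc] using fun _ (h : y < x) => h.ne'
  rw [← ncard_inter_add_ncard_sdiff_eq_ncard S (diagonal α) hfin,
    ← ncard_inter_add_ncard_sdiff_eq_ncard (S \ diagonal α) {p | p.2 < p.1} hfin.sdiff,
    hlower, hupper, ncard_preimage_of_injective_subset_range Prod.swap_injective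
      (by simp [Prod.swap_surjective.range_eq]), two_mul]

/-- The representations of `n` as an ordered sum of two positive `k`-th powers; their number is
written `r_k⁺(n)`. -/
def posPowReps (k n : ℕ) : Set (ℕ × ℕ) :=
  {p | 0 < p.1 ∧ 0 < p.2 ∧ p.1 ^ k + p.2 ^ k = n}

theorem finite_posPowReps {k : ℕ} (hk : k ≠ 0) (n : ℕ) : (posPowReps k n).Finite := by
  refine (finite_Iic (n, n)).subset ?_
  rintro ⟨x, y⟩ ⟨-, -, hsum⟩
  exact ⟨(Nat.le_self_pow hk x).trans (hsum ▸ Nat.le_add_right _ _),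
    (Nat.le_self_pow hk y).trans (hsum ▸ Nat.le_add_left _ _)⟩

theorem preimage_swap_posPowReps (k n : ℕ) : Prod.swap ⁻¹' posPowReps k n = posPowReps k n := by
  ext ⟨x, y⟩
  simp only [posPowReps, mem_preimage, Prod.swap_prod_mk, mem_ofPred_eq, add_comm (y ^ k),
    and_left_comm]

theorem add_self_pow_succ {R : Type*} [CommSemiring R] (a : R) (k : ℕ) :
    (a + a) ^ (k + 1) = 2 ^ k * (a ^ (k + 1) + a ^ (k + 1)) := by
  ring

theorem bijOn_add_posPowReps_inter_diagonal {k n : ℕ} (hk : k ≠ 0) (hn : 0 < n) :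
    BijOn (fun p : ℕ × ℕ => p.1 + p.2) (posPowReps (k + 1) n ∩ diagonal ℕ)
      {d | d ∣ n ∧ d ^ (k + 1) = 2 ^ k * n} := by
  refine ⟨?mapsTo, ?injOn, ?surjOn⟩
  case mapsTo =>
    rintro ⟨m, m'⟩ ⟨⟨-, -, hsum⟩, rfl : m = m'⟩
    obtain rfl : m ^ (k + 1) + m ^ (k + 1) = n := hsum
    exact ⟨⟨m ^ k, by ring⟩, add_self_pow_succ m k⟩
  case injOn =>
    rintro ⟨a, a'⟩ ⟨-, rfl : a = a'⟩ ⟨b, b'⟩ ⟨-, rfl : b = b'⟩ (hab : a + a = b + b)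
    obtain rfl : a = b := by omega
    rfl
  case surjOn =>
    rintro d ⟨-, hd⟩
    have hpow_even : Even (d ^ (k + 1)) := hd ▸ (even_two.pow_of_ne_zero hk).mul_right n
    obtain ⟨m, rfl⟩ : Even d := (Nat.even_pow.1 hpow_even).1
    have hsum : m ^ (k + 1) + m ^ (k + 1) = n :=
      Nat.eq_of_mul_eq_mul_left (by positivity) ((add_self_pow_succ m k).symm.trans hd)
    have hm : 0 < m := by
      rw [Nat.pos_iff_ne_zero]
      rintro rfl
      simp [hn.ne] at hsum
    exact ⟨(m, m), ⟨⟨hm, hm, hsum⟩, rfl⟩, rfl⟩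

theorem add_pow_three_add_pow_three {R : Type*} [CommSemiring R] (y k : R) :
    (y + k) ^ 3 + y ^ 3 = (2 * y + k) * (y ^ 2 + y * k + k ^ 2) := by
  ring

theorem two_mul_add_sq_add_three_mul_sq {R : Type*} [CommSemiring R] (y k : R) :
    (2 * y + k) ^ 2 + 3 * k ^ 2 = 4 * (y ^ 2 + y * k + k ^ 2) := by
  ring

theorem add_pow_three_add_pow_three_eq_iff {y k n : ℕ} (hpos : 0 < 2 * y + k) :
    (y + k) ^ 3 + y ^ 3 = n ↔
      2 * y + k ∣ n ∧ (2 * y + k) ^ 2 + 3 * k ^ 2 = 4 * (n / (2 * y + k)) := by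
  rw [add_pow_three_add_pow_three, two_mul_add_sq_add_three_mul_sq,
    Nat.mul_right_inj four_ne_zero]
  constructor
  · rintro rfl
    exact ⟨dvd_mul_right _ _, (Nat.mul_div_cancel_left _ hpos).symm⟩
  · rintro ⟨hdvd, hquot⟩
    rw [hquot, Nat.mul_div_cancel' hdvd]

theorem bijOn_add_sub_posPowReps_three (n : ℕ) :
    BijOn (fun p : ℕ × ℕ => (p.1 + p.2, p.1 - p.2)) (posPowReps 3 n ∩ {p | p.2 < p.1})
      {dk | dk.1 ∣ n ∧ 0 < dk.2 ∧ dk.1 ^ 2 + 3 * dk.2 ^ 2 = 4 * (n / dk.1) ∧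
        dk.1 % 2 = dk.2 % 2 ∧ 2 ≤ (dk.1 : ℤ) - (dk.2 : ℤ)} := by
  refine ⟨?mapsTo, ?injOn, ?surjOn⟩
  case mapsTo =>
    rintro ⟨x, y⟩ ⟨⟨-, hy : 0 < y, hsum : x ^ 3 + y ^ 3 = n⟩, hlt : y < x⟩
    obtain ⟨k, rfl⟩ := Nat.exists_eq_add_of_le hlt.le
    obtain ⟨hdvd, hquot⟩ := (add_pow_three_add_pow_three_eq_iff (by omega)).1 hsum
    have hd : y + k + y = 2 * y + k := by ring
    simp only [mem_ofPred_eq, hd, Nat.add_sub_cancel_left]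
    exact ⟨hdvd, by omega, hquot, by omega, by omega⟩
  case injOn =>
    rintro ⟨x, y⟩ ⟨-, hxy : y < x⟩ ⟨z, w⟩ ⟨-, hzw : w < z⟩ heq
    simp only [Prod.mk.injEq] at heq ⊢
    omega
  case surjOn =>
    rintro ⟨d, k⟩ ⟨hdvd, hk, hquot, hparity, hgap⟩
    obtain ⟨y, rfl⟩ : ∃ y, d = 2 * y + k := ⟨(d - k) / 2, by omega⟩
    have hsum : (y + k) ^ 3 + y ^ 3 = n :=
      (add_pow_three_add_pow_three_eq_iff (by omega)).2 ⟨hdvd, hquot⟩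
    refine ⟨(y + k, y), ⟨⟨by omega, by omega, hsum⟩, Nat.lt_add_of_pos_right hk⟩, ?_⟩
    simp only [Prod.mk.injEq]
    omega

/-- The number of ordered pairs `(x, y)` of positive integers with `x³ + y³ = n` equals the
number of positive divisors `d` of `n` with `d³ = 4n`, plus twice the number of pairs `(d, k)`
with `d` a positive divisor of `n`, `k` a positive integer, `d² + 3k² = 4(n/d)`,
`d ≡ k (mod 2)` and `d − k ≥ 2`. -/
theorem sum_two_pos_cubes_count (n : ℕ) (hn : 0 < n) :
    Set.ncard {p : ℕ × ℕ | 0 < p.1 ∧ 0 < p.2 ∧ p.1 ^ 3 + p.2 ^ 3 = n} =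
      Set.ncard {d : ℕ | d ∣ n ∧ d ^ 3 = 4 * n} +
        2 * Set.ncard {dk : ℕ × ℕ | dk.1 ∣ n ∧ 0 < dk.2 ∧
          dk.1 ^ 2 + 3 * dk.2 ^ 2 = 4 * (n / dk.1) ∧ dk.1 % 2 = dk.2 % 2 ∧
          2 ≤ (dk.1 : ℤ) - (dk.2 : ℤ)} := by
  have hsplit : (posPowReps 3 n).ncard = (posPowReps 3 n ∩ diagonal ℕ).ncard +
      2 * (posPowReps 3 n ∩ {p | p.2 < p.1}).ncard :=
    ncard_eq_ncard_inter_diagonal_add_two_mul (finite_posPowReps three_ne_zero n)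
      (preimage_swap_posPowReps 3 n)
  have hdiag : (posPowReps 3 n ∩ diagonal ℕ).ncard = {d | d ∣ n ∧ d ^ 3 = 4 * n}.ncard :=
    (bijOn_add_posPowReps_inter_diagonal two_ne_zero hn).ncard_eq
  rw [hdiag, (bijOn_add_sub_posPowReps_three n).ncard_eq] at hsplit
  exact hsplit
end

section
/- For every positive integer n, the number of ordered pairs (x,y) of integers with x^3 + y^3 = n equals (the number of positive divisors d of n with d^3 = 4n) plus twice (the number of pairs (d,k), where d is a positive divisor of n and k is a positive integer, such that d^2 + 3k^2 = 4(n/d) and d ≡ k (mod 2)). -/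
/-!
Writing `d = x + y` and `k = x - y`, the equation `x³ + y³ = n` becomes `d (d² + 3k²) = 4n`, where
`d` divides `n` and has the parity of `k`; if `n > 0` then also `d > 0`, as the other factor is
nonnegative. Solutions with `x = y` correspond to `k = 0`, and exchanging `x` and `y` changes the
sign of `k`, so the solutions with `k > 0` account for half of the others.
-/

open Set

section SymmetricSets

variable {α : Type*} {s : Set (α × α)}

theorem ncard_sep_fst_eq_snd (s : Set (α × α)) :
    {p ∈ s | p.1 = p.2}.ncard = {a | (a, a) ∈ s}.ncard := by
  have hdiag : {p ∈ s | p.1 = p.2} = (fun a ↦ (a, a)) '' {a | (a, a) ∈ s} := by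
    ext ⟨a, b⟩
    simp only [mem_ofPred_eq, mem_image, Prod.mk.injEq]
    constructor
    · rintro ⟨h, rfl⟩
      exact ⟨a, h, rfl, rfl⟩
    · rintro ⟨c, h, rfl, rfl⟩
      exact ⟨h, rfl⟩
  rw [hdiag, ncard_image_of_injective _ fun a b h ↦ congrArg Prod.fst h]

theorem ncard_sep_fst_lt_snd_of_swap_mem [LT α] (hswap : ∀ p ∈ s, p.swap ∈ s) :
    {p ∈ s | p.1 < p.2}.ncard = {p ∈ s | p.2 < p.1}.ncard := by
  have himage : {p ∈ s | p.1 < p.2} = Prod.swap '' {p ∈ s | p.2 < p.1} := by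
    rw [image_swap_eq_preimage_swap]
    ext p
    exact and_congr_left fun _ ↦ ⟨hswap p, hswap p.swap⟩
  rw [himage, ncard_image_of_injective _ Prod.swap_injective]

theorem ncard_eq_ncard_diag_add_two_mul_ncard_lt [LinearOrder α] (hs : s.Finite)
    (hswap : ∀ p ∈ s, p.swap ∈ s) :
    s.ncard = {a | (a, a) ∈ s}.ncard + 2 * {p ∈ s | p.2 < p.1}.ncard := by
  have hsplit : s = {p ∈ s | p.1 = p.2} ∪ ({p ∈ s | p.1 < p.2} ∪ {p ∈ s | p.2 < p.1}) := by
    ext p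
    simp only [mem_union, mem_ofPred_eq, ← and_or_left]
    have := lt_trichotomy p.1 p.2
    tauto
  have hlt : Disjoint {p ∈ s | p.1 < p.2} {p ∈ s | p.2 < p.1} :=
    disjoint_left.2 fun _ hp hp' ↦ hp.2.asymm hp'.2
  have heq : Disjoint {p ∈ s | p.1 = p.2} ({p ∈ s | p.1 < p.2} ∪ {p ∈ s | p.2 < p.1}) :=
    disjoint_left.2 fun _ hp hp' ↦ hp'.elim (fun h ↦ h.2.ne hp.2) (fun h ↦ h.2.ne' hp.2)
  conv_lhs => rw [hsplit]
  rw [ncard_union_eq heq (hs.sep _) ((hs.sep _).union (hs.sep _)),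
    ncard_union_eq hlt (hs.sep _) (hs.sep _), ncard_sep_fst_lt_snd_of_swap_mem hswap,
    ncard_sep_fst_eq_snd, two_mul]

end SymmetricSets

theorem eq_mul_div_iff_mul_eq {a c d n : ℕ} (hd : 0 < d) (hdn : d ∣ n) :
    a = c * (n / d) ↔ d * a = c * n := by
  rw [← Nat.mul_div_assoc c hdn, Nat.eq_div_iff_mul_eq_left hd.ne' (hdn.mul_left c), mul_comm a,
    eq_comm]

theorem four_mul_cube_add_cube {R : Type*} [CommRing R] (x y : R) :
    4 * (x ^ 3 + y ^ 3) = (x + y) * ((x + y) ^ 2 + 3 * (x - y) ^ 2) := by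
  ring

theorem pow_add_pow_nonneg_iff_of_odd {R : Type*} [Ring R] [LinearOrder R] [IsStrictOrderedRing R]
    {m : ℕ} (hm : Odd m) {x y : R} : 0 ≤ x ^ m + y ^ m ↔ 0 ≤ x + y := by
  rw [← neg_le_iff_add_nonneg', ← neg_le_iff_add_nonneg', ← hm.neg_pow, hm.pow_le_pow]

theorem abs_le_two_mul_abs_cube_add_cube {x y : ℤ} (h : x ^ 3 + y ^ 3 ≠ 0) :
    |x| ≤ 2 * |x ^ 3 + y ^ 3| := by
  have hdvd : x ^ 2 - x * y + y ^ 2 ∣ |x ^ 3 + y ^ 3| :=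
    (dvd_abs _ _).2 ⟨x + y, by ring⟩
  have hle : x ^ 2 - x * y + y ^ 2 ≤ |x ^ 3 + y ^ 3| := Int.le_of_dvd (abs_pos.2 h) hdvd
  have hsq : 3 * x ^ 2 ≤ 4 * (x ^ 2 - x * y + y ^ 2) := by linarith [sq_nonneg (2 * y - x)]
  have habs : |x| ≤ x ^ 2 := sq_abs x ▸ Int.le_self_sq |x|
  linarith [abs_nonneg (x ^ 3 + y ^ 3)]

/-- The representations of `n` as an ordered sum of two integer cubes; their number is the `r₃(n)`
of the literature. -/
def cubeSumReps (n : ℤ) : Set (ℤ × ℤ) :=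
  {p | p.1 ^ 3 + p.2 ^ 3 = n}

theorem finite_cubeSumReps {n : ℤ} (hn : n ≠ 0) : (cubeSumReps n).Finite := by
  refine ((finite_Icc (-(2 * |n|)) (2 * |n|)).prod (finite_Icc (-(2 * |n|)) (2 * |n|))).subset ?_
  rintro ⟨x, y⟩ rfl
  refine ⟨abs_le.1 (abs_le_two_mul_abs_cube_add_cube hn), abs_le.1 ?_⟩
  rw [add_comm] at hn ⊢
  exact abs_le_two_mul_abs_cube_add_cube hn

theorem swap_mem_cubeSumReps {n : ℤ} {p : ℤ × ℤ} (hp : p ∈ cubeSumReps n) :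
    p.swap ∈ cubeSumReps n :=
  (add_comm _ _).trans hp

theorem mem_cubeSumReps_iff_of_add_eq_of_sub_eq {n x y d k : ℤ} (hd : x + y = d) (hk : x - y = k) :
    (x, y) ∈ cubeSumReps n ↔ d * (d ^ 2 + 3 * k ^ 2) = 4 * n := by
  rw [← hd, ← hk, ← four_mul_cube_add_cube, mul_right_inj' four_ne_zero]
  rfl

theorem add_dvd_of_mem_cubeSumReps {n x y : ℤ} (h : (x, y) ∈ cubeSumReps n) : x + y ∣ n :=
  h ▸ Odd.add_dvd_pow_add_pow x y (by decide)

theorem add_nonneg_of_mem_cubeSumReps {n x y : ℤ} (hn : 0 ≤ n) (h : (x, y) ∈ cubeSumReps n) :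
    0 ≤ x + y :=
  (pow_add_pow_nonneg_iff_of_odd (by decide)).1 (hn.trans_eq h.symm)

theorem mem_cubeSumReps_self_iff {n d : ℕ} {x : ℤ} (hd : x + x = d) :
    (x, x) ∈ cubeSumReps n ↔ d ^ 3 = 4 * n := by
  rw [mem_cubeSumReps_iff_of_add_eq_of_sub_eq hd (sub_self x)]
  norm_cast
  ring_nf

theorem bijOn_diag_cubeSumReps (n : ℕ) :
    BijOn (fun x : ℤ ↦ (x + x).toNat) {x | (x, x) ∈ cubeSumReps n}
      {d : ℕ | d ∣ n ∧ d ^ 3 = 4 * n} := by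
  have hnonneg : ∀ {x : ℤ}, (x, x) ∈ cubeSumReps n → 0 ≤ x + x :=
    add_nonneg_of_mem_cubeSumReps n.cast_nonneg
  refine ⟨fun x h ↦ ?_, fun x h y h' heq ↦ ?_, ?_⟩
  · have hd := (Int.toNat_of_nonneg (hnonneg h)).symm
    exact ⟨Int.natCast_dvd_natCast.1 (hd ▸ add_dvd_of_mem_cubeSumReps h),
      (mem_cubeSumReps_self_iff hd).1 h⟩
  · have hx := hnonneg h
    have hy := hnonneg h'
    simp only at heq
    lia
  · rintro d ⟨-, hcube⟩
    have heven : 2 ∣ d := Nat.prime_two.dvd_of_dvd_pow (n := 3) (by lia)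
    obtain ⟨x, hx⟩ : ∃ x : ℤ, x + x = d := ⟨d / 2, by lia⟩
    refine ⟨x, (mem_cubeSumReps_self_iff hx).2 hcube, ?_⟩
    simp only [hx, Int.toNat_natCast]

theorem mem_cubeSumReps_iff_dvd_and_eq_div {n d k : ℕ} {x y : ℤ} (hn : 0 < n)
    (hd : x + y = d) (hk : x - y = k) :
    (x, y) ∈ cubeSumReps n ↔ d ∣ n ∧ d ^ 2 + 3 * k ^ 2 = 4 * (n / d) := by
  have hdvd : (x, y) ∈ cubeSumReps n → d ∣ n := fun h ↦
    Int.natCast_dvd_natCast.1 (hd ▸ add_dvd_of_mem_cubeSumReps h)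
  rw [← and_iff_right_of_imp hdvd, mem_cubeSumReps_iff_of_add_eq_of_sub_eq hd hk]
  refine and_congr_right fun hdn ↦ ?_
  rw [eq_mul_div_iff_mul_eq (Nat.pos_of_dvd_of_pos hdn hn) hdn]
  norm_cast

theorem bijOn_lt_cubeSumReps {n : ℕ} (hn : 0 < n) :
    BijOn (fun p : ℤ × ℤ ↦ ((p.1 + p.2).toNat, (p.1 - p.2).toNat))
      {p ∈ cubeSumReps n | p.2 < p.1}
      {dk : ℕ × ℕ | dk.1 ∣ n ∧ 0 < dk.2 ∧
        dk.1 ^ 2 + 3 * dk.2 ^ 2 = 4 * (n / dk.1) ∧ dk.1 % 2 = dk.2 % 2} := by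
  have hnonneg : ∀ {x y : ℤ}, (x, y) ∈ cubeSumReps n → 0 ≤ x + y :=
    add_nonneg_of_mem_cubeSumReps n.cast_nonneg
  refine ⟨?_, ?_, ?_⟩
  · rintro ⟨x, y⟩ ⟨h, hlt : y < x⟩
    obtain ⟨hdvd, heq⟩ := (mem_cubeSumReps_iff_dvd_and_eq_div hn
      (Int.toNat_of_nonneg (hnonneg h)).symm (Int.toNat_of_nonneg (sub_pos.2 hlt).le).symm).1 h
    have hadd := hnonneg h
    exact ⟨hdvd, by lia, heq, by lia⟩
  · rintro ⟨x, y⟩ ⟨h, hlt : y < x⟩ ⟨x', y'⟩ ⟨h', -⟩ heq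
    have hxy := hnonneg h
    have hxy' := hnonneg h'
    simp only [Prod.mk.injEq] at heq ⊢
    lia
  · rintro ⟨d, k⟩ ⟨hdvd, hk, heq, hparity⟩
    obtain ⟨x, y, hd, hk'⟩ : ∃ x y : ℤ, x + y = d ∧ x - y = k :=
      ⟨(d + k) / 2, (d - k) / 2, by lia, by lia⟩
    refine ⟨(x, y), ⟨(mem_cubeSumReps_iff_dvd_and_eq_div hn hd hk').2 ⟨hdvd, heq⟩, by lia⟩, ?_⟩
    simp only [hd, hk', Int.toNat_natCast]

/-- The number of ordered pairs `(x, y)` of integers with `x³ + y³ = n` equals the number of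
positive divisors `d` of `n` with `d³ = 4n`, plus twice the number of pairs `(d, k)` with `d` a
positive divisor of `n`, `k` a positive integer, `d² + 3k² = 4(n/d)` and `d ≡ k (mod 2)`. -/
theorem sum_two_int_cubes_count (n : ℕ) (hn : 0 < n) :
    Set.ncard {p : ℤ × ℤ | p.1 ^ 3 + p.2 ^ 3 = (n : ℤ)} =
      Set.ncard {d : ℕ | d ∣ n ∧ d ^ 3 = 4 * n} +
        2 * Set.ncard {dk : ℕ × ℕ | dk.1 ∣ n ∧ 0 < dk.2 ∧
          dk.1 ^ 2 + 3 * dk.2 ^ 2 = 4 * (n / dk.1) ∧ dk.1 % 2 = dk.2 % 2} := by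
  rw [← (bijOn_diag_cubeSumReps n).ncard_eq, ← (bijOn_lt_cubeSumReps hn).ncard_eq]
  exact ncard_eq_ncard_diag_add_two_mul_ncard_lt (finite_cubeSumReps (by exact_mod_cast hn.ne'))
    fun _ ↦ swap_mem_cubeSumReps
end
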